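/- In the tableau T_{φ0}, if ρ is a maximal ε-path that is not blocked and whose label L(ρ) (the label of its last node) is not blatantly inconsistent, then L(ρ) is closed under sub+-formulas: for every φ ∈ L(ρ) and every ψ ∈ sub+(φ), either ψ ∈ L(ρ) or ∼ψ ∈ L(ρ), where ∼ψ = χ if ψ = ¬χ and ∼ψ = ¬ψ otherwise. -/

import Mathlib

/-!
Formalization of the logic of strategically knowing how (ELKh_n) and of the
tableau procedure for it.
-/

namespace ELKh

/-- Formulas of the language ELKh_n:
`φ ::= ⊥ | p | ¬φ | (φ ∧ φ) | K_i φ | Kh_i φ`. -/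
inductive Formula (P I : Type) : Type
  | bot : Formula P I
  | atom : P → Formula P I
  | neg : Formula P I → Formula P I
  | and : Formula P I → Formula P I → Formula P I
  | know : I → Formula P I → Formula P I
  | kh : I → Formula P I → Formula P I

variable {P I : Type}

/-- Models of ELKh_n: states with equivalence relations `∼ᵢ`, actions for each
agent, a transition relation for each action, and a valuation. -/
structure Model (P I : Type) where
  W : Type
  sim : I → W → W → Prop
  equiv : ∀ i, Equivalence (sim i)
  Act : I → Type
  R : (i : I) → Act i → W → W → Prop
  V : W → P → Prop

/-- Transition between `i`-equivalence classes (classes are represented by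
member states): `[s]ⁱ →ₐ [t]ⁱ` iff some `s' ∈ [s]ⁱ`, `t' ∈ [t]ⁱ` have `R a s' t'`. -/
def Model.ctrans (M : Model P I) (i : I) (a : M.Act i) (s t : M.W) : Prop :=
  ∃ s' t', M.sim i s s' ∧ M.sim i t t' ∧ M.R i a s' t'

/-- Uniformly executable strategies for agent `i`: partial functions from
`∼ᵢ`-equivalence classes to actions of `i` (hence constant on classes), whose
chosen action is executable at every member of the class. -/
structure Strategy (M : Model P I) (i : I) where
  act : M.W → Option (M.Act i)
  congr : ∀ s t, M.sim i s t → act s = act t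
  exec : ∀ s a, act s = some a → ∀ t, M.sim i s t → ∃ u, M.R i a t u

namespace Strategy

variable {M : Model P I} {i : I}

/-- The `k`-th step of the sequence of classes `[δ 0][δ 1]⋯` is a σ-step. -/
def Steps (σ : Strategy M i) (δ : ℕ → M.W) (k : ℕ) : Prop :=
  ∃ a, σ.act (δ k) = some a ∧ M.ctrans i a (δ k) (δ (k+1))

/-- `[δ 0]⋯[δ h]` is a (finite) possible execution of σ. -/
def FinExec (σ : Strategy M i) (δ : ℕ → M.W) (h : ℕ) : Prop :=
  ∀ k < h, σ.Steps δ k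

/-- `[δ 0]⋯[δ h]` is a complete finite execution of σ (its end class is not in
the domain of σ). -/
def CompleteFinExec (σ : Strategy M i) (δ : ℕ → M.W) (h : ℕ) : Prop :=
  σ.FinExec δ h ∧ σ.act (δ h) = none

/-- `[δ 0][δ 1]⋯` is an infinite possible execution of σ (such an execution is
automatically complete). -/
def InfExec (σ : Strategy M i) (δ : ℕ → M.W) : Prop :=
  ∀ k, σ.Steps δ k

end Strategy

/-- Satisfaction for ELKh_n.  `Kh_i φ` holds at `s` iff there is a strategy σ
for `i` such that all complete executions of σ starting from `[s]ⁱ` are finite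
(equivalently: there is no infinite execution of σ from `[s]ⁱ`) and every state
of every end class of a complete (finite) execution from `[s]ⁱ` satisfies `φ`. -/
def Sat (M : Model P I) : M.W → Formula P I → Prop
  | _, .bot => False
  | s, .atom p => M.V s p
  | s, .neg φ => ¬ Sat M s φ
  | s, .and φ ψ => Sat M s φ ∧ Sat M s ψ
  | s, .know i φ => ∀ t, M.sim i s t → Sat M t φ
  | s, .kh i φ => ∃ σ : Strategy M i,
      (∀ δ : ℕ → M.W, M.sim i s (δ 0) → ¬ σ.InfExec δ) ∧
      (∀ (δ : ℕ → M.W) (h : ℕ), M.sim i s (δ 0) → σ.CompleteFinExec δ h →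
        ∀ t, M.sim i (δ h) t → Sat M t φ)

/-! ### Subformulas -/

/-- The set of subformulas of a formula. -/
def subf : Formula P I → Set (Formula P I)
  | .bot => {Formula.bot}
  | .atom p => {Formula.atom p}
  | .neg φ => insert (Formula.neg φ) (subf φ)
  | .and φ ψ => insert (Formula.and φ ψ) (subf φ ∪ subf ψ)
  | .know i φ => insert (Formula.know i φ) (subf φ)
  | .kh i φ => insert (Formula.kh i φ) (subf φ)

/-- `sub⁺(φ₀) = {ψ, ¬ψ : ψ subformula of φ₀} ∪ {Kᵢψ, ¬Kᵢψ : Khᵢψ subformula of φ₀}`. -/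
def subPlus (φ0 : Formula P I) : Set (Formula P I) :=
  {χ | ∃ ψ ∈ subf φ0, χ = ψ ∨ χ = Formula.neg ψ} ∪
  {χ | ∃ i ψ, Formula.kh i ψ ∈ subf φ0 ∧
      (χ = Formula.know i ψ ∨ χ = Formula.neg (Formula.know i ψ))}

/-- `∼ψ`:  `∼¬χ = χ`, and `∼ψ = ¬ψ` otherwise. -/
def simNeg : Formula P I → Formula P I
  | .neg χ => χ
  | ψ => Formula.neg ψ

/-! ### Labeled trees -/

/-- Labels of tableau edges: `ε`, an agent `i`, or an action `a_{Khᵢψ}`. -/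
inductive ELabel (P I : Type) : Type
  | eps : ELabel P I
  | ag : I → ELabel P I
  | act : I → Formula P I → ELabel P I

/-- Labeled rooted trees: each node is labeled with a set of formulas, each
non-root node carries the label of the edge connecting it to its parent, and
`blockedBy n = some n'` records that the node `n` is blocked by `n'`. -/
structure LTree (P I : Type) where
  Node : Type
  root : Node
  parent : Node → Option Node
  depth : Node → ℕ
  label : Node → Set (Formula P I)
  elabel : Node → ELabel P I
  blockedBy : Node → Option Node
  parent_root : parent root = none
  eq_root : ∀ n, parent n = none → n = root
  depth_root : depth root = 0
  depth_parent : ∀ n m, parent n = some m → depth n = depth m + 1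

variable (T : LTree P I)

/-- The children of a node. -/
def Children (n : T.Node) : Set T.Node := {m | T.parent m = some n}

/-- A node is a leaf iff it has no children. -/
def IsLeaf (n : T.Node) : Prop := ∀ m, T.parent m ≠ some n

/-- `Ancestor T m n`: `m` is a proper ancestor of `n`. -/
def Ancestor (m n : T.Node) : Prop :=
  Relation.TransGen (fun a b => T.parent b = some a) m n

/-- `IAnc T i m n`: `m` is an `i`-ancestor of `n`, i.e. a proper ancestor of
`n` connected to `n` by a path all of whose edges are labeled `i` or `ε`. -/
inductive IAnc (i : I) : T.Node → T.Node → Prop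
  | single {m n} : T.parent n = some m →
      (T.elabel n = ELabel.eps ∨ T.elabel n = ELabel.ag i) → IAnc i m n
  | cons {m k n} : T.parent n = some k →
      (T.elabel n = ELabel.eps ∨ T.elabel n = ELabel.ag i) →
      IAnc i m k → IAnc i m n

/-! ### The tableau construction -/

/-- A set of formulas is blatantly inconsistent iff it contains `⊥` or some
pair `ψ, ¬ψ`. -/
def Blatant (Γ : Set (Formula P I)) : Prop :=
  Formula.bot ∈ Γ ∨ ∃ ψ, ψ ∈ Γ ∧ Formula.neg ψ ∈ Γ

/-- `AutoChecked Γ φ` holds iff none of the expansion rules (a)-(g) is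
applicable to `φ` in the label `Γ`; such formulas are (and remain) marked
``checked'' by step (h) of the construction. -/
def AutoChecked (Γ : Set (Formula P I)) : Formula P I → Prop
  | .neg (.neg ψ) => ψ ∈ Γ
  | .and ψ χ => ψ ∈ Γ ∧ χ ∈ Γ
  | .neg (.and ψ χ) =>
      (Formula.neg ψ ∈ Γ ∧ Formula.neg χ ∈ Γ) ∨
      (Formula.neg ψ ∈ Γ ∧ χ ∈ Γ) ∨ (ψ ∈ Γ ∧ Formula.neg χ ∈ Γ)
  | .know _ ψ => ψ ∈ Γ
  | .neg (.know _ ψ) => Formula.neg ψ ∈ Γ ∨ ψ ∈ Γ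
  | .kh i ψ => Formula.neg (Formula.know i ψ) ∈ Γ ∨ Formula.know i ψ ∈ Γ
  | .neg (.kh i ψ) => Formula.neg (Formula.know i ψ) ∈ Γ
  | _ => True

/-- All formulas of `Γ` are checked; nodes with such labels are the ``and''
nodes (expanded by step (2)), the remaining expanded nodes are ``or'' nodes. -/
def Saturated (Γ : Set (Formula P I)) : Prop := ∀ φ ∈ Γ, AutoChecked Γ φ

/-- The labels of the children created when one of the rules (a)-(g) processes
the formula `φ` at a node labeled `Γ`. -/
def orOut (Γ : Set (Formula P I)) : Formula P I → Set (Set (Formula P I))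
  | .neg (.neg ψ) => {insert ψ Γ}
  | .and ψ χ => {insert ψ (insert χ Γ)}
  | .neg (.and ψ χ) =>
      {insert (Formula.neg ψ) (insert (Formula.neg χ) Γ),
       insert (Formula.neg ψ) (insert χ Γ),
       insert ψ (insert (Formula.neg χ) Γ)}
  | .know _ ψ => {insert ψ Γ}
  | .neg (.know _ ψ) => {insert (Formula.neg ψ) Γ, insert ψ Γ}
  | .kh i ψ =>
      {insert (Formula.neg (Formula.know i ψ)) Γ, insert (Formula.know i ψ) Γ}
  | .neg (.kh i ψ) => {insert (Formula.neg (Formula.know i ψ)) Γ}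
  | _ => ∅

/-- `Σ(n,¬Kᵢψ) = {¬ψ} ∪ Γ|Kᵢ ∪ Γ|¬Kᵢ ∪ Γ|Khᵢ ∪ Γ|¬Khᵢ` where `Γ = L(n)`. -/
def SigmaSet (Γ : Set (Formula P I)) (i : I) (ψ : Formula P I) :
    Set (Formula P I) :=
  insert (Formula.neg ψ)
    {φ ∈ Γ | (∃ χ, φ = Formula.know i χ) ∨ (∃ χ, φ = Formula.neg (Formula.know i χ)) ∨
             (∃ χ, φ = Formula.kh i χ) ∨ (∃ χ, φ = Formula.neg (Formula.kh i χ))}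

/-- Expansion condition for ``or'' nodes (step (1), rules (a)-(g)): some
unchecked formula of the label is processed and the children of the node are
exactly the prescribed `ε`-children. -/
def OrNodeCond (n : T.Node) : Prop :=
  ∃ φ ∈ T.label n, ¬ AutoChecked (T.label n) φ ∧
    (∀ Δ ∈ orOut (T.label n) φ,
      ∃ m, T.parent m = some n ∧ T.elabel m = ELabel.eps ∧ T.label m = Δ ∧
        T.blockedBy m = none) ∧
    (∀ m, T.parent m = some n →
      T.elabel m = ELabel.eps ∧ T.label m ∈ orOut (T.label n) φ ∧
        T.blockedBy m = none)

/-- Expansion condition for ``and'' nodes (step (2), rules (i), (j), (k)): the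
children of the node are exactly those prescribed by the three rules, and a
(k)-child is blocked iff some ancestor carries the same label. -/
def AndNodeCond (n : T.Node) : Prop :=
  (∀ i ψ, Formula.neg (Formula.know i ψ) ∈ T.label n →
    ¬ (∃ n', IAnc T i n' n ∧ T.label n' = SigmaSet (T.label n) i ψ) →
    ∃ m, T.parent m = some n ∧ T.elabel m = ELabel.ag i ∧
      T.label m = SigmaSet (T.label n) i ψ ∧ T.blockedBy m = none) ∧
  (∀ i ψ, Formula.kh i ψ ∈ T.label n → Formula.neg (Formula.know i ψ) ∈ T.label n →
    ∃ m, T.parent m = some n ∧ T.elabel m = ELabel.act i ψ ∧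
      T.label m = {Formula.know i ψ} ∧ T.blockedBy m = none) ∧
  (∀ i ψ χ, Formula.neg (Formula.kh i χ) ∈ T.label n →
    Formula.kh i ψ ∈ T.label n → Formula.neg (Formula.know i ψ) ∈ T.label n →
    ∃ m, T.parent m = some n ∧ T.elabel m = ELabel.act i ψ ∧
      T.label m = {Formula.know i ψ, Formula.neg (Formula.kh i χ)} ∧
      ((∃ n', Ancestor T n' m ∧ T.label n' = T.label m) ↔ T.blockedBy m ≠ none)) ∧
  (∀ m, T.parent m = some n →
    (∃ i ψ, T.elabel m = ELabel.ag i ∧ Formula.neg (Formula.know i ψ) ∈ T.label n ∧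
      T.label m = SigmaSet (T.label n) i ψ ∧
      ¬ (∃ n', IAnc T i n' n ∧ T.label n' = SigmaSet (T.label n) i ψ)) ∨
    (∃ i ψ, T.elabel m = ELabel.act i ψ ∧ Formula.kh i ψ ∈ T.label n ∧
      Formula.neg (Formula.know i ψ) ∈ T.label n ∧
      T.label m = {Formula.know i ψ}) ∨
    (∃ i ψ χ, T.elabel m = ELabel.act i ψ ∧ Formula.neg (Formula.kh i χ) ∈ T.label n ∧
      Formula.kh i ψ ∈ T.label n ∧ Formula.neg (Formula.know i ψ) ∈ T.label n ∧
      T.label m = {Formula.know i ψ, Formula.neg (Formula.kh i χ)}))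

/-- `T` is a tableau for `φ₀`: the root is labeled `{φ₀}`, blocked nodes are
blocked by an ancestor with the same label, blocked nodes and blatantly
inconsistent nodes are leaves, and every other node is expanded according to
step (1) (``or'' nodes) or step (2) (``and'' nodes) of the construction. -/
structure IsTableau (φ0 : Formula P I) (T : LTree P I) : Prop where
  root_label : T.label T.root = {φ0}
  blocked_spec : ∀ n n', T.blockedBy n = some n' →
    Ancestor T n' n ∧ T.label n' = T.label n
  blocked_leaf : ∀ n, T.blockedBy n ≠ none → IsLeaf T n
  blatant_leaf : ∀ n, Blatant (T.label n) → IsLeaf T n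
  or_node : ∀ n, ¬ Blatant (T.label n) → T.blockedBy n = none →
    ¬ Saturated (T.label n) → OrNodeCond T n
  and_node : ∀ n, ¬ Blatant (T.label n) → T.blockedBy n = none →
    Saturated (T.label n) → AndNodeCond T n

/-! ### Subtrees -/

/-- A subtree: a set of nodes containing the root and closed under parents. -/
def IsSubtree (S : Set T.Node) : Prop :=
  T.root ∈ S ∧ ∀ n ∈ S, ∀ m, T.parent n = some m → m ∈ S

/-- A complete subtree: it contains the root, all children of each of its
``and'' non-leaf nodes, and at least one child of each of its ``or'' non-leaf
nodes. -/
def CompleteSubtree (S : Set T.Node) : Prop :=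
  IsSubtree T S ∧
  (∀ n ∈ S, ¬ IsLeaf T n → Saturated (T.label n) → ∀ m ∈ Children T n, m ∈ S) ∧
  (∀ n ∈ S, ¬ IsLeaf T n → ¬ Saturated (T.label n) → ∃ m ∈ Children T n, m ∈ S)

/-- A subtree is closed iff some of its nodes has a blatantly inconsistent
label; otherwise it is open. -/
def ClosedSubtree (S : Set T.Node) : Prop := ∃ n ∈ S, Blatant (T.label n)

/-- A tableau is closed iff all its complete subtrees are closed. -/
def TableauClosed : Prop := ∀ S : Set T.Node, CompleteSubtree T S → ClosedSubtree T S

/-! ### Maximal ε-paths and the induced model -/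

/-- An `ε`-edge from `m` down to `n` inside the node set `S`. -/
def EpsStep (S : Set T.Node) (m n : T.Node) : Prop :=
  m ∈ S ∧ n ∈ S ∧ T.parent n = some m ∧ T.elabel n = ELabel.eps

/-- `n` is an `ε`-descendant of `m` inside `S` (reflexive-transitive). -/
def EpsDesc (S : Set T.Node) : T.Node → T.Node → Prop :=
  Relation.ReflTransGen (EpsStep T S)

/-- A maximal `ε`-path of the subtree with node set `S`, recorded by its
initial node `top` and its end node `bot`.  Its label is `T.label bot`. -/
structure MaxEpsPath (T : LTree P I) (S : Set T.Node) where
  top : T.Node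
  bot : T.Node
  top_mem : top ∈ S
  bot_mem : bot ∈ S
  desc : EpsDesc T S top bot
  top_max : ∀ m, ¬ EpsStep T S m top
  bot_max : ∀ m, ¬ EpsStep T S bot m

/-- The states of the induced model: non-blocked maximal `ε`-paths. -/
def PathW (T : LTree P I) (S : Set T.Node) : Type :=
  {ρ : MaxEpsPath T S // T.blockedBy ρ.bot = none}

/-- `ρ₂` is an `i`-child path of `ρ₁`: `ρ₁ρ₂` is a path whose connecting edge
is labeled `i`. -/
def ISimStep (S : Set T.Node) (i : I) (ρ1 ρ2 : PathW T S) : Prop :=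
  T.parent ρ2.1.top = some ρ1.1.bot ∧ T.elabel ρ2.1.top = ELabel.ag i

/-- The node `n'` lies on the maximal `ε`-path `ρ`. -/
def OnPath (S : Set T.Node) (ρ : MaxEpsPath T S) (n' : T.Node) : Prop :=
  EpsDesc T S ρ.top n' ∧ EpsDesc T S n' ρ.bot

/-- The model `M^T` induced by the (complete) subtree with node set `S`:
states are the non-blocked maximal `ε`-paths, `∼ᵢ` is the least equivalence
relation containing the `i`-edge steps, actions of agent `i` are the actions
`a_{Khᵢψ}` labeling edges of the subtree, `(ρ, ρ') ∈ R_a` iff there is an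
`a`-edge from the end of `ρ` to the start of a maximal `ε`-path `ρ''` where
`ρ'' = ρ'` or `ρ''` is blocked by a node lying on `ρ'`, and `ρ ∈ V(p)` iff
`p ∈ L(ρ)`. -/
def inducedModel (T : LTree P I) (S : Set T.Node) : Model P I where
  W := PathW T S
  sim := fun i => Relation.EqvGen (ISimStep T S i)
  equiv := fun _ => Relation.EqvGen.is_equivalence _
  Act := fun i => {ψ : Formula P I // ∃ m n, m ∈ S ∧ n ∈ S ∧
    T.parent m = some n ∧ T.elabel m = ELabel.act i ψ}
  R := fun i a ρ1 ρ2 => ∃ ρ'' : MaxEpsPath T S,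
    T.parent ρ''.top = some ρ1.1.bot ∧ T.elabel ρ''.top = ELabel.act i a.1 ∧
    (ρ'' = ρ2.1 ∨ ∃ n', T.blockedBy ρ''.bot = some n' ∧ OnPath T S ρ2.1 n')
  V := fun ρ p => Formula.atom p ∈ T.label ρ.1.bot

/-- `L(ρ)|Kᵢ`: the `Kᵢ`-formulas of `Γ`. -/
def projK (i : I) (Γ : Set (Formula P I)) : Set (Formula P I) :=
  {φ ∈ Γ | ∃ ψ, φ = Formula.know i ψ}

/-- `L(ρ)|¬Kᵢ`: the `¬Kᵢ`-formulas of `Γ`. -/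
def projNK (i : I) (Γ : Set (Formula P I)) : Set (Formula P I) :=
  {φ ∈ Γ | ∃ ψ, φ = Formula.neg (Formula.know i ψ)}

/-- `L(ρ)|Khᵢ`: the `Khᵢ`-formulas of `Γ`. -/
def projKh (i : I) (Γ : Set (Formula P I)) : Set (Formula P I) :=
  {φ ∈ Γ | ∃ ψ, φ = Formula.kh i ψ}

/-- `L(ρ)|¬Khᵢ`: the `¬Khᵢ`-formulas of `Γ`. -/
def projNKh (i : I) (Γ : Set (Formula P I)) : Set (Formula P I) :=
  {φ ∈ Γ | ∃ ψ, φ = Formula.neg (Formula.kh i ψ)}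

/-- An unchecked formula always produces at least one child label. -/
lemma orOut_nonempty {P I : Type} {Γ : Set (Formula P I)} {φ : Formula P I}
    (h : ¬ AutoChecked Γ φ) : (orOut Γ φ).Nonempty := by
  rcases φ with _ | _ | (_ | _ | _ | _ | _ | _) | _ | _ | _ <;>
    simp_all [AutoChecked, orOut, Set.insert_nonempty]

/-- The end of a maximal `ε`-path that is neither blocked nor blatantly
inconsistent has a saturated label. -/
lemma MaxEpsPath.saturated_label {P I : Type} {φ0 : Formula P I} {T : LTree P I}
    (hT : IsTableau φ0 T) (ρ : MaxEpsPath T Set.univ)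
    (hnb : T.blockedBy ρ.bot = none) (hni : ¬ Blatant (T.label ρ.bot)) :
    Saturated (T.label ρ.bot) := by
  by_contra hs
  obtain ⟨φ, -, hφ, hchild, -⟩ := hT.or_node ρ.bot hni hnb hs
  obtain ⟨Δ, hΔ⟩ := orOut_nonempty hφ
  obtain ⟨m, hm, he, -, -⟩ := hchild Δ hΔ
  exact ρ.bot_max m ⟨trivial, trivial, hm, he⟩

/-- `Γ` decides `φ`: it contains `φ` or its negation. -/
def Decides {P I : Type} (Γ : Set (Formula P I)) (φ : Formula P I) : Prop :=
  φ ∈ Γ ∨ Formula.neg φ ∈ Γ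

namespace Saturated

variable {P I : Type} {Γ : Set (Formula P I)} {φ χ : Formula P I} {i : I}

lemma decides_of_neg (hs : Saturated Γ) (h : Decides Γ (.neg φ)) : Decides Γ φ :=
  h.elim Or.inr fun h => Or.inl (hs _ h)

lemma decides_of_and (hs : Saturated Γ) (h : Decides Γ (.and φ χ)) :
    Decides Γ φ ∧ Decides Γ χ := by
  rcases h with h | h
  · have := hs _ h
    simp only [AutoChecked] at this
    exact ⟨Or.inl this.1, Or.inl this.2⟩
  · have := hs _ h
    simp only [AutoChecked] at this
    unfold Decides
    tauto

lemma decides_of_know (hs : Saturated Γ) (h : Decides Γ (.know i φ)) : Decides Γ φ :=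
  h.elim (fun h => Or.inl (hs _ h)) fun h => (hs _ h : _ ∨ _).symm

lemma decides_know_of_kh (hs : Saturated Γ) (h : Decides Γ (.kh i φ)) :
    Decides Γ (.know i φ) :=
  h.elim (fun h => (hs _ h : _ ∨ _).symm) fun h => Or.inr (hs _ h)

/-- A saturated set decides all subformulas of the formulas it decides. -/
lemma decides_of_mem_subf (hs : Saturated Γ) (h : Decides Γ φ) (hχ : χ ∈ subf φ) :
    Decides Γ χ := by
  induction φ with
  | bot | atom =>
    obtain rfl := hχ
    exact h
  | neg φ ih =>
    rcases hχ with rfl | hχ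
    · exact h
    · exact ih (hs.decides_of_neg h) hχ
  | and φ₁ φ₂ ih₁ ih₂ =>
    rcases hχ with rfl | hχ | hχ
    · exact h
    · exact ih₁ (hs.decides_of_and h).1 hχ
    · exact ih₂ (hs.decides_of_and h).2 hχ
  | know i φ ih =>
    rcases hχ with rfl | hχ
    · exact h
    · exact ih (hs.decides_of_know h) hχ
  | kh i φ ih =>
    rcases hχ with rfl | hχ
    · exact h
    · exact ih (hs.decides_of_know (hs.decides_know_of_kh h)) hχ

lemma mem_or_simNeg_mem (hs : Saturated Γ) (h : Decides Γ φ) : φ ∈ Γ ∨ simNeg φ ∈ Γ := by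
  rcases h with h | h
  · exact Or.inl h
  · cases φ with
    | neg φ => exact Or.inr (hs _ h)
    | _ => exact Or.inr h

end Saturated

/-- in the tableau for `φ₀`, the label of a non-blocked,
non-blatantly-inconsistent maximal `ε`-path is closed under `sub⁺`-formulas. -/
theorem maxEpsPath_label_subPlus_closed {P I : Type} (hI : ∃ i j : I, i ≠ j)
    (φ0 : Formula P I) (T : LTree P I) (hT : IsTableau φ0 T)
    (ρ : MaxEpsPath T Set.univ)
    (hnb : T.blockedBy ρ.bot = none)
    (hni : ¬ Blatant (T.label ρ.bot)) :
    ∀ φ ∈ T.label ρ.bot, ∀ ψ ∈ subPlus φ,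
      ψ ∈ T.label ρ.bot ∨ simNeg ψ ∈ T.label ρ.bot := by
  have hs := ρ.saturated_label hT hnb hni
  rintro φ hφ ψ (⟨χ, hχ, rfl | rfl⟩ | ⟨i, χ, hχ, rfl | rfl⟩)
  · exact hs.mem_or_simNeg_mem (hs.decides_of_mem_subf (Or.inl hφ) hχ)
  · exact (hs.decides_of_mem_subf (Or.inl hφ) hχ).symm
  · exact hs.decides_know_of_kh (hs.decides_of_mem_subf (Or.inl hφ) hχ)
  · exact (hs.decides_know_of_kh (hs.decides_of_mem_subf (Or.inl hφ) hχ)).symm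

end ELKh
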